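/- arXiv:1902.10881 — 2 statements merged into one kernel-verified Lean document; each statement's English description precedes it below -/
import Mathlib

section
/- A connected graph G on at least 3 vertices satisfies vcfc(G) = 2 if and only if G is 2-connected or G has exactly one cut-vertex. -/
open SimpleGraph

/-- A vertex coloring makes `G` conflict-free vertex-connected if every pair of
distinct vertices is joined by a path on which some color appears on exactly one vertex. -/
def IsCFVertexConnColoring {V : Type*} (G : SimpleGraph V) (c : V → ℕ) : Prop :=
  ∀ u v : V, u ≠ v → ∃ p : G.Walk u v, p.IsPath ∧
    ∃ col : ℕ, (p.support.filter (fun x => c x = col)).length = 1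

/-- The conflict-free vertex-connection number of `G`. -/
noncomputable def vcfConn {V : Type*} (G : SimpleGraph V) : ℕ :=
  sInf {k | ∃ c : V → ℕ, (∀ v, c v < k) ∧ IsCFVertexConnColoring G c}

/-- `v` is a cut-vertex: deleting it disconnects the graph. -/
def IsCutVertex {V : Type*} (G : SimpleGraph V) (v : V) : Prop :=
  ¬ (G.induce {u | u ≠ v}).Connected

/-- `G` is 2-connected: it is connected and deleting any single vertex
leaves it connected. -/
def TwoConnected {V : Type*} (G : SimpleGraph V) : Prop :=
  G.Connected ∧ ∀ v : V, (G.induce {u | u ≠ v}).Connected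

/-- Walks avoiding `x` give reachability in the graph with `x` deleted, and conversely. -/
lemma reachable_induce_ne_iff {V : Type*} {G : SimpleGraph V} {x a b : V}
    (ha : a ≠ x) (hb : b ≠ x) :
    (G.induce {u | u ≠ x}).Reachable ⟨a, ha⟩ ⟨b, hb⟩ ↔
      ∃ p : G.Walk a b, x ∉ p.support := by
  constructor
  · rintro ⟨p⟩
    have hp : x ∉ (p.map (Embedding.induce {u | u ≠ x}).toHom).support := by
      intro hx
      rw [Walk.support_map, List.mem_map] at hx
      obtain ⟨z, -, hz⟩ := hx
      exact z.2 hz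
    exact ⟨p.map (Embedding.induce {u | u ≠ x}).toHom, hp⟩
  · rintro ⟨p, hp⟩
    exact ⟨p.induce {u | u ≠ x} fun z hz h => hp (h ▸ hz)⟩

lemma IsCutVertex.exists_separated {V : Type*} {G : SimpleGraph V} {x y : V}
    (hx : IsCutVertex G x) (hy : y ≠ x) :
    ∃ a, a ≠ x ∧ ∀ p : G.Walk a y, x ∈ p.support := by
  by_contra! h
  refine hx ((connected_iff_exists_forall_reachable _).2 ⟨⟨y, hy⟩, ?_⟩)
  rintro ⟨a, ha⟩
  exact ((reachable_induce_ne_iff ha hy).2 (h a ha)).symm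

lemma exists_walk_of_not_isCutVertex {V : Type*} {G : SimpleGraph V} {x a b : V}
    (hx : ¬ IsCutVertex G x) (ha : a ≠ x) (hb : b ≠ x) :
    ∃ p : G.Walk a b, x ∉ p.support :=
  (reachable_induce_ne_iff ha hb).1 ((not_not.1 hx).preconnected _ _)

lemma SimpleGraph.Walk.IsPath.eq_of_mem_takeUntil_of_mem_dropUntil {V : Type*} [DecidableEq V]
    {G : SimpleGraph V} {u v y z : V} {p : G.Walk u v} (hp : p.IsPath) (hz : z ∈ p.support)
    (h₁ : y ∈ (p.takeUntil z hz).support) (h₂ : y ∈ (p.dropUntil z hz).support) : y = z := by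
  have h := hp.support_nodup
  rw [← p.take_spec hz, Walk.support_append] at h
  rw [Walk.mem_support_iff] at h₂
  exact h₂.resolve_right fun h₂ => List.disjoint_of_nodup_append h h₁ h₂

/-- A walk starting in a set has a final part meeting that set only in its start. -/
lemma SimpleGraph.Walk.exists_last_exit {V : Type*} {G : SimpleGraph V} (X : Set V) {s t : V}
    (w : G.Walk s t) (hs : s ∈ X) :
    ∃ a ∈ X, ∃ r : G.Walk a t, r.support ⊆ w.support ∧ ∀ z ∈ r.support, z ∈ X → z = a := by
  classical
  induction hn : w.length using Nat.strong_induction_on generalizing s with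
  | _ n ih =>
    by_cases hX : ∃ z ∈ w.support, z ∈ X ∧ z ≠ s
    · obtain ⟨z, hz, hzX, hzs⟩ := hX
      have hlen : (w.dropUntil z hz).length < n := by
        have h₁ := congrArg Walk.length (w.take_spec hz)
        rw [Walk.length_append] at h₁
        have h₂ : (w.takeUntil z hz).length ≠ 0 := fun h => hzs (Walk.eq_of_length_eq_zero h).symm
        omega
      obtain ⟨a, ha, r, hr, h⟩ := ih _ hlen (w.dropUntil z hz) hzX rfl
      exact ⟨a, ha, r, fun y hy => w.support_dropUntil_subset_support hz (hr hy), h⟩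
    · push Not at hX
      exact ⟨s, hs, w, fun _ h => h, hX⟩

/-- `u` and `v` are the ends of two walks from `x` that meet only in `x`. -/
def HasFan {V : Type*} (G : SimpleGraph V) (x u v : V) : Prop :=
  ∃ (p : G.Walk x u) (q : G.Walk x v), ∀ z ∈ p.support, z ∈ q.support → z = x

lemma HasFan.exists_isPath {V : Type*} {G : SimpleGraph V} {x u v : V} (h : HasFan G x u v) :
    ∃ p : G.Walk u v, p.IsPath ∧ x ∈ p.support := by
  classical
  obtain ⟨p, q, h⟩ := h
  refine ⟨p.bypass.reverse.append q.bypass, ?_, by simp⟩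
  have hq := q.bypass_isPath.support_nodup
  rw [Walk.isPath_def, Walk.support_append, List.nodup_append']
  refine ⟨p.bypass_isPath.reverse.support_nodup, hq.tail, ?_⟩
  intro z hz hz'
  have hzp : z ∈ p.support := p.support_bypass_subset_support (by simpa using hz)
  obtain rfl := h z hzp (q.support_bypass_subset_support (List.mem_of_mem_tail hz'))
  rw [← Walk.cons_tail_support] at hq
  exact (List.nodup_cons.1 hq).1 hz'

lemma HasFan.of_adj {V : Type*} {G : SimpleGraph V} {x u u' v : V}
    (hcut : ∀ w, w ≠ x → ¬ IsCutVertex G w) (h : HasFan G x u v) (huu' : G.Adj u u')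
    (hu'v : u' ≠ v) : HasFan G x u' v := by
  classical
  obtain ⟨p, q₀, h₀⟩ := h
  obtain ⟨q, hq, h⟩ : ∃ q : G.Walk x v, q.IsPath ∧ ∀ z ∈ p.support, z ∈ q.support → z = x :=
    ⟨q₀.bypass, q₀.bypass_isPath, fun z hz hz' => h₀ z hz (q₀.support_bypass_subset_support hz')⟩
  by_cases hp' : u' ∈ p.support
  · exact ⟨p.takeUntil u' hp', q, fun z hz => h z (p.support_takeUntil_subset_support hp' hz)⟩
  by_cases hq' : u' ∈ q.support
  swap
  · refine ⟨p.concat huu', q, fun z hz hzq => ?_⟩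
    rw [Walk.support_concat, List.mem_append, List.mem_singleton] at hz
    rcases hz with hz | rfl
    · exact h z hz hzq
    · exact absurd hzq hq'
  have hu'x : u' ≠ x := fun h => hp' (h ▸ p.start_mem_support)
  obtain ⟨w, hw⟩ := exists_walk_of_not_isCutVertex (hcut u' hu'x) hu'x.symm hu'v.symm
  have hsub : ∀ z, z ∈ (q.takeUntil u' hq').support → z ∈ q.support :=
    fun z hz => q.support_takeUntil_subset_support hq' hz
  have hq₁ := hq.takeUntil hq'
  generalize q.takeUntil u' hq' = q₁ at *
  obtain ⟨a, ha, r, hrw, hr⟩ :=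
    w.exists_last_exit {z | z ∈ p.support ∨ z ∈ q₁.support} (Or.inl p.start_mem_support)
  have hu'r : u' ∉ r.support := fun h => hw (hrw h)
  have hu'a : u' ≠ a := fun h => hu'r (h ▸ r.start_mem_support)
  by_cases hap : a ∈ p.support
  · refine ⟨q₁, (p.takeUntil a hap).append r, fun z hz hz' => ?_⟩
    rw [Walk.mem_support_append_iff] at hz'
    rcases hz' with hz' | hz'
    · exact h z (p.support_takeUntil_subset_support hap hz') (hsub z hz)
    · obtain rfl := hr z hz' (Or.inr hz)
      exact h z hap (hsub z hz)
  · have haq : a ∈ q₁.support := ha.resolve_left hap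
    have hu't : u' ∉ (q₁.takeUntil a haq).support := fun h =>
      hu'a (hq₁.eq_of_mem_takeUntil_of_mem_dropUntil haq h (Walk.end_mem_support _))
    refine ⟨p.concat huu', (q₁.takeUntil a haq).append r, fun z hz hz' => ?_⟩
    rw [Walk.mem_support_append_iff] at hz'
    rw [Walk.support_concat, List.mem_append, List.mem_singleton] at hz
    rcases hz with hz | rfl
    · rcases hz' with hz' | hz'
      · exact h z hz (hsub z (q₁.support_takeUntil_subset_support haq hz'))
      · obtain rfl := hr z hz' (Or.inl hz)
        exact absurd hz hap
    · exact absurd hz' (by tauto)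

/-- If no vertex other than `x` is a cut-vertex, any two distinct vertices are joined by a path
through `x`. -/
lemma exists_isPath_mem_support {V : Type*} {G : SimpleGraph V} (hconn : G.Connected) {x : V}
    (hcut : ∀ w, w ≠ x → ¬ IsCutVertex G w) {u v : V} (huv : u ≠ v) :
    ∃ p : G.Walk u v, p.IsPath ∧ x ∈ p.support := by
  rcases eq_or_ne v x with rfl | hv
  · obtain ⟨p, hp⟩ := hconn.exists_isPath u v
    exact ⟨p, hp, p.end_mem_support⟩
  apply HasFan.exists_isPath
  have hstart : HasFan G x x v := ⟨Walk.nil, (hconn x v).some, by simp⟩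
  obtain ⟨w, hw⟩ := exists_walk_of_not_isCutVertex (hcut v hv) hv.symm huv
  have key : ∀ {s t : V} (w : G.Walk s t), v ∉ w.support → HasFan G x s v → HasFan G x t v := by
    intro s t w
    induction w with
    | nil => exact fun _ h => h
    | cons hadj w ih =>
      intro hw h
      rw [Walk.support_cons, List.mem_cons, not_or] at hw
      exact ih hw.2 (h.of_adj hcut hadj fun h => hw.2 (h ▸ Walk.start_mem_support _))
  exact key w hw hstart

lemma eq_of_length_filter_eq_one {V : Type*} {c : V → ℕ} {col : ℕ} {l : List V}
    (h : (l.filter (fun x => c x = col)).length = 1) {a b : V} (ha : a ∈ l) (hb : b ∈ l)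
    (hac : c a = col) (hbc : c b = col) : a = b := by
  obtain ⟨z, hz⟩ := List.length_eq_one_iff.1 h
  have ha' : a ∈ l.filter (fun x => c x = col) := by simp [ha, hac]
  have hb' : b ∈ l.filter (fun x => c x = col) := by simp [hb, hbc]
  rw [hz, List.mem_singleton] at ha' hb'
  rw [ha', hb']

lemma exists_mem_of_length_filter_eq_one {V : Type*} {c : V → ℕ} {col : ℕ} {l : List V}
    (h : (l.filter (fun x => c x = col)).length = 1) : ∃ z ∈ l, c z = col := by
  obtain ⟨z, hz⟩ := List.length_eq_one_iff.1 h
  have : z ∈ l.filter (fun x => c x = col) := by simp [hz]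
  exact ⟨z, by simpa using this⟩

/-- In a conflict-free coloring, a part cut off by `x` contains a vertex whose color is not
that of `x`. -/
lemma IsCutVertex.exists_separated_color_ne {V : Type*} {G : SimpleGraph V} {c : V → ℕ}
    (hc : IsCFVertexConnColoring G c) {x y : V} (hx : IsCutVertex G x) (hy : y ≠ x) :
    ∃ u, u ≠ x ∧ c u ≠ c x ∧ ∀ p : G.Walk u y, x ∈ p.support := by
  classical
  obtain ⟨a, hax, ha⟩ := hx.exists_separated hy
  obtain ⟨p, hp, col, hcol⟩ := hc a x hax
  by_contra! hmono
  have hsame : ∀ z ∈ p.support, c z = c x := by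
    intro z hz
    by_contra hzc
    have hzx : z ≠ x := fun h => hzc (congrArg c h)
    obtain ⟨q, hq⟩ := hmono z hzx hzc
    have := ha ((p.takeUntil z hz).append q)
    rw [Walk.mem_support_append_iff] at this
    rcases this with h | h
    · exact hzx (hp.eq_of_mem_takeUntil_of_mem_dropUntil hz h (Walk.end_mem_support _)).symm
    · exact hq h
  obtain ⟨z, hz, hzc⟩ := exists_mem_of_length_filter_eq_one hcol
  have hxc : c x = col := (hsame z hz).symm.trans hzc
  exact hax (eq_of_length_filter_eq_one hcol p.start_mem_support p.end_mem_support
    ((hsame a p.start_mem_support).trans hxc) hxc)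

/-- If `y` separates `v` from `x`, then some walk from `v` to `y` avoids `x`. -/
lemma exists_walk_notMem_of_separated {V : Type*} {G : SimpleGraph V} (hconn : G.Connected)
    {x y v : V} (hxy : x ≠ y) (hv : ∀ p : G.Walk v x, y ∈ p.support) :
    ∃ p : G.Walk v y, x ∉ p.support := by
  classical
  obtain ⟨p, hp⟩ := hconn.exists_isPath v x
  exact ⟨p.takeUntil y (hv p), fun h =>
    hxy (hp.eq_of_mem_takeUntil_of_mem_dropUntil (hv p) h (Walk.end_mem_support _))⟩

lemma IsCutVertex.eq_of_isCFVertexConnColoring {V : Type*} {G : SimpleGraph V}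
    (hconn : G.Connected) {c : V → ℕ} (hc : IsCFVertexConnColoring G c) (hc₂ : ∀ v, c v < 2)
    {x y : V} (hx : IsCutVertex G x) (hy : IsCutVertex G y) : x = y := by
  by_contra hxy
  obtain ⟨u, hux, hcu, hu⟩ := hx.exists_separated_color_ne hc (Ne.symm hxy)
  obtain ⟨v, hvy, hcv, hv⟩ := hy.exists_separated_color_ne hc hxy
  obtain ⟨q, hq⟩ := exists_walk_notMem_of_separated hconn hxy hv
  obtain ⟨q', hq'⟩ := exists_walk_notMem_of_separated hconn (Ne.symm hxy) hu
  have huv : u ≠ v := by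
    rintro rfl
    exact hq (hu q)
  have huy : u ≠ y := fun h => hq' (h ▸ q'.start_mem_support)
  have hvx : v ≠ x := fun h => hq (h ▸ q.start_mem_support)
  obtain ⟨p, -, col, hcol⟩ := hc u v huv
  have hxp : x ∈ p.support :=
    ((Walk.mem_support_append_iff _ _).1 (hu (p.append q))).resolve_right hq
  have hyp : y ∈ p.support := by
    simpa using ((Walk.mem_support_append_iff _ _).1 (hv (p.reverse.append q'))).resolve_right hq'
  have hup := p.start_mem_support
  have hvp := p.end_mem_support
  obtain ⟨z, -, hz⟩ := exists_mem_of_length_filter_eq_one hcol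
  have hz₂ := hc₂ z
  have hcx : c u = col ∨ c x = col := by
    have := hc₂ u
    have := hc₂ x
    omega
  have hcy : c v = col ∨ c y = col := by
    have := hc₂ v
    have := hc₂ y
    omega
  rcases hcx with h₁ | h₁ <;> rcases hcy with h₂ | h₂
  · exact huv (eq_of_length_filter_eq_one hcol hup hvp h₁ h₂)
  · exact huy (eq_of_length_filter_eq_one hcol hup hyp h₁ h₂)
  · exact hvx (eq_of_length_filter_eq_one hcol hvp hxp h₂ h₁)
  · exact hxy (eq_of_length_filter_eq_one hcol hxp hyp h₁ h₂)

lemma exists_isCFVertexConnColoring_two {V : Type*} {G : SimpleGraph V} (hconn : G.Connected)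
    {x : V} (hcut : ∀ w, w ≠ x → ¬ IsCutVertex G w) :
    ∃ c : V → ℕ, (∀ v, c v < 2) ∧ IsCFVertexConnColoring G c := by
  classical
  refine ⟨fun v => if v = x then 1 else 0, fun v => by dsimp only; split_ifs <;> omega, ?_⟩
  intro u v huv
  obtain ⟨p, hp, hx⟩ := exists_isPath_mem_support hconn hcut huv
  refine ⟨p, hp, 1, ?_⟩
  have h := List.count_eq_one_of_mem hp.support_nodup hx
  rw [List.count, List.countP_eq_length_filter] at h
  refine (congrArg List.length (List.filter_congr fun z _ => ?_)).trans h
  by_cases hz : z = x <;> simp [hz]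

lemma two_le_of_isCFVertexConnColoring {V : Type*} [Nontrivial V] {G : SimpleGraph V} {k : ℕ}
    {c : V → ℕ} (hk : ∀ v, c v < k) (hc : IsCFVertexConnColoring G c) : 2 ≤ k := by
  by_contra! hlt
  obtain ⟨u, v, huv⟩ := exists_pair_ne V
  obtain ⟨p, -, col, hcol⟩ := hc u v huv
  obtain ⟨z, -, hz⟩ := exists_mem_of_length_filter_eq_one hcol
  have h₁ := hk u
  have h₂ := hk v
  have h₃ := hk z
  exact huv (eq_of_length_filter_eq_one hcol p.start_mem_support p.end_mem_support
    (by omega) (by omega))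

lemma vcfConn_eq_two_iff_exists_coloring {V : Type*} [Nontrivial V] {G : SimpleGraph V} :
    vcfConn G = 2 ↔ ∃ c : V → ℕ, (∀ v, c v < 2) ∧ IsCFVertexConnColoring G c := by
  constructor
  · intro h
    have hmem := Nat.sInf_mem (Nat.nonempty_of_pos_sInf (by
      change 0 < vcfConn G
      omega))
    change vcfConn G ∈ _ at hmem
    rwa [h] at hmem
  · intro h
    apply le_antisymm (Nat.sInf_le h)
    obtain ⟨c, hk, hc⟩ := Nat.sInf_mem (s := {k | ∃ c : V → ℕ, (∀ v, c v < k) ∧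
      IsCFVertexConnColoring G c}) ⟨2, h⟩
    exact two_le_of_isCFVertexConnColoring hk hc

/-- A connected graph `G` on at least `3` vertices satisfies `vcfc(G) = 2` if and
only if `G` is 2-connected or `G` has exactly one cut-vertex. -/
theorem vcfConn_eq_two_iff {V : Type*} [Fintype V] (G : SimpleGraph V)
    (hcard : 3 ≤ Fintype.card V) (hconn : G.Connected) :
    vcfConn G = 2 ↔ TwoConnected G ∨ (∃! x : V, IsCutVertex G x) := by
  have : Nontrivial V := Fintype.one_lt_card_iff_nontrivial.1 (by omega)
  rw [vcfConn_eq_two_iff_exists_coloring]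
  constructor
  · rintro ⟨c, hc₂, hc⟩
    by_cases hcut : ∃ x, IsCutVertex G x
    · obtain ⟨x, hx⟩ := hcut
      exact Or.inr ⟨x, hx, fun y hy => hy.eq_of_isCFVertexConnColoring hconn hc hc₂ hx⟩
    · exact Or.inl ⟨hconn, fun v => not_not.1 fun h => hcut ⟨v, h⟩⟩
  · rintro (h | ⟨x, -, hx⟩)
    · obtain ⟨x⟩ := hconn.nonempty
      exact exists_isCFVertexConnColoring_two hconn (x := x) fun w _ hw => hw (h.2 w)
    · exact exists_isCFVertexConnColoring_two hconn fun w hwx hw => hwx (hx w hw)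
end

section
/- For a connected graph G of diameter 2, cfc(G) = max{2, h(G)}. -/
open SimpleGraph

/-- An edge coloring makes `G` conflict-free connected if every pair of distinct
vertices is joined by a path on which some color appears on exactly one edge. -/
def IsCFConnColoring {V : Type*} (G : SimpleGraph V) (c : Sym2 V → ℕ) : Prop :=
  ∀ u v : V, u ≠ v → ∃ p : G.Walk u v, p.IsPath ∧
    ∃ col : ℕ, (p.edges.filter (fun e => c e = col)).length = 1

/-- The conflict-free connection number of `G`. -/
noncomputable def cfConn {V : Type*} (G : SimpleGraph V) : ℕ :=
  sInf {k | ∃ c : Sym2 V → ℕ, (∀ e ∈ G.edgeSet, c e < k) ∧ IsCFConnColoring G c}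

/-- The subgraph `C(G)` of `G` induced by the set of cut-edges (bridges). -/
def bridgeGraph {V : Type*} (G : SimpleGraph V) : SimpleGraph V :=
  SimpleGraph.fromEdgeSet {e | G.IsBridge e}

/-- `h(G)`: the maximum of `cfConn` over the components of the forest of cut-edges
of `G` (it equals `0` if `G` has no cut-edge). -/
noncomputable def hG {V : Type*} (G : SimpleGraph V) : ℕ :=
  sSup {n | ∃ comp : (bridgeGraph G).ConnectedComponent,
    n = cfConn ((bridgeGraph G).induce comp.supp)}

namespace SimpleGraph

variable {V : Type*} {G : SimpleGraph V}

lemma Walk.IsPath.append_of_inter {u v w : V} {p : G.Walk u v} {q : G.Walk v w}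
    (hp : p.IsPath) (hq : q.IsPath) (h : ∀ x ∈ p.support, x ∈ q.support → x = v) :
    (p.append q).IsPath := by
  induction p with
  | nil => simpa using hq
  | cons e p ih =>
    rw [Walk.cons_isPath_iff] at hp
    rw [Walk.cons_append, Walk.cons_isPath_iff]
    refine ⟨ih hp.1 hq fun x hx => h x (by simp [hx]), ?_⟩
    rw [Walk.mem_support_append_iff, not_or]
    refine ⟨hp.2, fun hq' => hp.2 ?_⟩
    have := h _ (by simp) hq'
    rw [this]
    exact p.end_mem_support

lemma Walk.exists_isPath_first_hit {u v : V} (p : G.Walk u v) (S : Set V) (hv : v ∈ S) :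
    ∃ z ∈ S, ∃ q : G.Walk u z, q.IsPath ∧ (∀ x ∈ q.support, x ∈ p.support) ∧
      ∀ x ∈ q.support, x ∈ S → x = z := by
  classical
  suffices h : ∃ z ∈ S, ∃ q : G.Walk u z, (∀ x ∈ q.support, x ∈ p.support) ∧
      ∀ x ∈ q.support, x ∈ S → x = z by
    obtain ⟨z, hz, q, h1, h2⟩ := h
    exact ⟨z, hz, q.bypass, q.bypass_isPath,
      fun x hx => h1 x (q.support_bypass_subset_support hx),
      fun x hx => h2 x (q.support_bypass_subset_support hx)⟩
  induction p with
  | nil => exact ⟨_, hv, Walk.nil, by simp, by simp⟩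
  | @cons a b _ e p ih =>
    by_cases ha : a ∈ S
    · exact ⟨a, ha, Walk.nil, by simp, by simp⟩
    · obtain ⟨z, hz, q, h1, h2⟩ := ih hv
      refine ⟨z, hz, Walk.cons e q, ?_, ?_⟩
      · grind [Walk.support_cons]
      · grind [Walk.support_cons]

/-- A path all of whose edges are bridges is the only path between its endpoints. -/
lemma Walk.IsPath.eq_of_isBridge {u v : V} {p q : G.Walk u v} (hp : p.IsPath) (hq : q.IsPath)
    (hb : ∀ e ∈ q.edges, G.IsBridge e) : p = q := by
  induction q with
  | nil => exact Walk.isPath_iff_nil.1 hp |>.eq_nil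
  | @cons a b c e q ih =>
    rw [Walk.cons_isPath_iff] at hq
    have hbr : G.IsBridge s(a, b) := hb _ (by simp)
    have hmem : s(a, b) ∈ p.edges := by
      have := isBridge_iff_forall_walk_mem_edges.1 hbr (p.append q.reverse)
      rw [Walk.edges_append, List.mem_append] at this
      rcases this with h | h
      · exact h
      · rw [Walk.edges_reverse, List.mem_reverse] at h
        exact absurd (Walk.fst_mem_support_of_mem_edges _ h) hq.2
    cases p with
    | nil => simp at hmem
    | @cons _ d _ f p =>
      rw [Walk.cons_isPath_iff] at hp
      rw [Walk.edges_cons, List.mem_cons] at hmem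
      rcases hmem with h | h
      · obtain rfl : b = d := by simpa [e.ne, e.ne.symm] using h
        rw [ih hp.1 hq.1 fun e he => hb e (by simp [he])]
      · exact absurd (Walk.fst_mem_support_of_mem_edges _ h) hp.2

lemma notMem_support_of_deleteIncidenceSet {v x y : V} (hx : x ≠ v)
    (p : (G.deleteIncidenceSet v).Walk x y) : v ∉ p.support := by
  induction p with
  | nil => simpa using hx.symm
  | cons e p ih =>
    have := G.deleteIncidenceSet_adj.1 e
    simp only [Walk.support_cons, List.mem_cons, not_or]
    exact ⟨hx.symm, ih this.2.2⟩

/-- Given a path from `x` to `y` through `e`, its endpoint can be moved to an adjacent vertex. -/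
lemma exists_isPath_mem_edges_of_adj
    (hG : ∀ v x y : V, x ≠ v → y ≠ v → (G.deleteIncidenceSet v).Reachable x y)
    {e : Sym2 V} {x y z : V} (h : ∃ p : G.Walk x y, p.IsPath ∧ e ∈ p.edges)
    (hyz : G.Adj y z) (hzx : z ≠ x) : ∃ p : G.Walk x z, p.IsPath ∧ e ∈ p.edges := by
  classical
  obtain ⟨p, hp, he⟩ := h
  by_cases hz : z ∈ p.support
  swap
  · exact ⟨p.concat hyz, hp.concat hz hyz, by simp [Walk.edges_concat, he]⟩
  rw [← p.take_spec hz, Walk.edges_append, List.mem_append] at he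
  rcases he with he | he
  · exact ⟨_, hp.takeUntil hz, he⟩
  set D := p.dropUntil z hz with hDdef
  have hD : D.IsPath := hp.dropUntil hz
  clear_value D
  obtain ⟨R⟩ := hG z x y hzx.symm hyz.ne
  have hR := notMem_support_of_deleteIncidenceSet hzx.symm R
  obtain ⟨t, ht, q, hq, hqR, hqt⟩ :=
    (R.mapLe (G.deleteIncidenceSet_le z)).exists_isPath_first_hit {t | t ∈ D.support}
      D.end_mem_support
  have hzq : z ∉ q.support := fun h => hR (by simpa using hqR _ h)
  have htz : t ≠ z := by rintro rfl; exact hzq q.end_mem_support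
  change t ∈ D.support at ht
  rw [← D.take_spec ht, Walk.edges_append, List.mem_append] at he
  rcases he with he | he
  · refine ⟨q.append (D.takeUntil t ht).reverse, ?_, ?_⟩
    · refine hq.append_of_inter (hD.takeUntil ht).reverse fun w hw hw' => hqt w hw ?_
      rw [Walk.support_reverse, List.mem_reverse] at hw'
      exact D.support_takeUntil_subset_support ht hw'
    · simp [Walk.edges_append, he]
  · have hz' : z ∉ (D.dropUntil t ht).support := by
      intro hz'
      have hsp := D.take_spec ht
      rw [← hsp] at hD
      exact hD.ne_of_mem_support_of_append htz.symm (D.takeUntil t ht).start_mem_support hz' rfl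
    refine ⟨q.append ((D.dropUntil t ht).concat hyz), ?_, ?_⟩
    · refine hq.append_of_inter ((hD.dropUntil ht).concat hz' hyz) fun w hw hw' => ?_
      rw [Walk.support_concat, List.mem_append, List.mem_singleton] at hw'
      rcases hw' with hw' | rfl
      · exact hqt w hw (D.support_dropUntil_subset_support ht hw')
      · exact absurd hw hzq
    · simp [Walk.edges_append, Walk.edges_concat, he]

lemma exists_isPath_mem_edges_of_walk
    (hG : ∀ v x y : V, x ≠ v → y ≠ v → (G.deleteIncidenceSet v).Reachable x y)
    {e : Sym2 V} {x y z : V} (h : ∃ p : G.Walk x y, p.IsPath ∧ e ∈ p.edges)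
    (q : (G.deleteIncidenceSet x).Walk y z) : ∃ p : G.Walk x z, p.IsPath ∧ e ∈ p.edges := by
  induction q with
  | nil => exact h
  | cons f q ih =>
    obtain ⟨f1, f2, f3⟩ := G.deleteIncidenceSet_adj.1 f
    exact ih (exists_isPath_mem_edges_of_adj hG h f1 f3)

lemma exists_isPath_mem_edges_comm {e : Sym2 V} {x y : V}
    (h : ∃ p : G.Walk x y, p.IsPath ∧ e ∈ p.edges) :
    ∃ p : G.Walk y x, p.IsPath ∧ e ∈ p.edges := by
  obtain ⟨p, hp, he⟩ := h
  exact ⟨p.reverse, hp.reverse, by simpa using he⟩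

/-- In a graph without cut vertices, any two distinct vertices are joined by a path through any
prescribed edge. -/
lemma exists_isPath_mem_edges
    (hG : ∀ v x y : V, x ≠ v → y ≠ v → (G.deleteIncidenceSet v).Reachable x y)
    {a b x y : V} (hab : G.Adj a b) (hxy : x ≠ y) :
    ∃ p : G.Walk x y, p.IsPath ∧ s(a, b) ∈ p.edges := by
  have h0 : ∃ p : G.Walk a b, p.IsPath ∧ s(a, b) ∈ p.edges :=
    ⟨hab.toWalk, by simp [hab.ne], by simp⟩
  have move {u v w : V} (h : ∃ p : G.Walk u v, p.IsPath ∧ s(a, b) ∈ p.edges) (hv : v ≠ u)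
      (hw : w ≠ u) : ∃ p : G.Walk u w, p.IsPath ∧ s(a, b) ∈ p.edges :=
    exists_isPath_mem_edges_of_walk hG h (hG u v w hv hw).some
  by_cases hy : y = a
  · subst hy
    exact exists_isPath_mem_edges_comm (move h0 hab.ne.symm hxy)
  · exact exists_isPath_mem_edges_comm
      (move (exists_isPath_mem_edges_comm (move h0 hab.ne.symm hy)) (Ne.symm hy) hxy)

end SimpleGraph

lemma List.Nodup.length_filter_eq_one {α β : Type*} [DecidableEq β] {l : List α} (hl : l.Nodup)
    {c : α → β} {e : α} (he : e ∈ l) (hc : ∀ e' ∈ l, c e' = c e → e' = e) :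
    (l.filter (fun e' => c e' = c e)).length = 1 := by
  classical
  have : l.filter (fun e' => c e' = c e) = l.filter (fun e' => e' = e) := by
    apply List.filter_congr
    intro x hx
    simpa using ⟨hc x hx, fun h => by rw [h]⟩
  rw [this, ← List.countP_eq_length_filter]
  exact List.count_eq_one_of_mem hl he

namespace SimpleGraph

variable {V : Type*} {G : SimpleGraph V}

lemma exists_isCFConnColoring [Finite V] (hG : G.Connected) :
    {k | ∃ c : Sym2 V → ℕ, (∀ e ∈ G.edgeSet, c e < k) ∧ IsCFConnColoring G c}.Nonempty := by
  have := Fintype.ofFinite (Sym2 V)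
  refine ⟨Fintype.card (Sym2 V), fun e => Fintype.equivFin _ e, fun e _ => Fin.is_lt _, ?_⟩
  intro u v huv
  obtain ⟨p, hp⟩ := hG.exists_isPath u v
  refine ⟨p, hp, ?_⟩
  obtain ⟨e, he⟩ : ∃ e, e ∈ p.edges := by
    cases p with
    | nil => exact absurd rfl huv
    | cons f p => exact ⟨_, List.mem_cons_self⟩
  exact ⟨_, hp.isTrail.edges_nodup.length_filter_eq_one he (by simp [Fin.ext_iff.symm])⟩

lemma two_le_of_isCFConnColoring {c : Sym2 V → ℕ} {k : ℕ} (hc : IsCFConnColoring G c)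
    (hk : ∀ e ∈ G.edgeSet, c e < k) {u v : V} (huv : u ≠ v) (hadj : ¬ G.Adj u v) : 2 ≤ k := by
  by_contra! hlt
  obtain ⟨p, -, col, hcol⟩ := hc u v huv
  have h0 : ∀ e ∈ p.edges, c e = 0 := fun e he => by
    have := hk e (p.edges_subset_edgeSet he)
    omega
  have hlen : 2 ≤ p.edges.length := by
    cases p with
    | nil => exact absurd rfl huv
    | cons f p =>
      cases p with
      | nil => exact absurd f hadj
      | cons g p => simp
  by_cases h : col = 0
  · rw [List.filter_eq_self.2 (by simpa [h] using h0)] at hcol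
    omega
  · rw [List.filter_eq_nil_iff.2 (by intro e he; simpa [h0 e he] using Ne.symm h)] at hcol
    simp at hcol

lemma isBridge_of_bridgeGraph_adj {u v : V} (h : (bridgeGraph G).Adj u v) :
    G.IsBridge s(u, v) := by
  rw [bridgeGraph, fromEdgeSet_adj] at h
  exact h.1

lemma bridgeGraph_le (hG : G.Connected) : bridgeGraph G ≤ G := fun u v h =>
  (isBridge_of_bridgeGraph_adj h).reachable_iff_adj.1 (hG u v)

/-- Inclusion of a component of the graph of cut-edges. -/
def bridgeComponentHom (hG : G.Connected) (comp : (bridgeGraph G).ConnectedComponent) :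
    (bridgeGraph G).induce comp.supp →g G :=
  (Hom.ofLE (bridgeGraph_le hG)).comp (Embedding.induce comp.supp).toHom

lemma bridgeComponentHom_injective (hG : G.Connected)
    (comp : (bridgeGraph G).ConnectedComponent) :
    Function.Injective (bridgeComponentHom hG comp) := Subtype.val_injective

lemma isBridge_of_mem_edges_map_bridgeComponentHom (hG : G.Connected)
    {comp : (bridgeGraph G).ConnectedComponent} {x y : comp.supp}
    (p : ((bridgeGraph G).induce comp.supp).Walk x y) :
    ∀ e ∈ (p.map (bridgeComponentHom hG comp)).edges, G.IsBridge e := by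
  intro e he
  rw [Walk.edges_map, List.mem_map] at he
  obtain ⟨f, hf, rfl⟩ := he
  have := p.edges_subset_edgeSet hf
  induction f with
  | _ a b => exact isBridge_of_bridgeGraph_adj this

lemma IsCFConnColoring.bridgeComponent (hG : G.Connected) {c : Sym2 V → ℕ}
    (hc : IsCFConnColoring G c) (comp : (bridgeGraph G).ConnectedComponent) :
    IsCFConnColoring ((bridgeGraph G).induce comp.supp)
      (fun e => c (e.map (bridgeComponentHom hG comp))) := by
  intro u v huv
  obtain ⟨p, hp, col, hcol⟩ := hc (bridgeComponentHom hG comp u) (bridgeComponentHom hG comp v)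
    ((bridgeComponentHom_injective hG comp).ne huv)
  have hH : ((bridgeGraph G).induce comp.supp).Connected := comp.connected_toSimpleGraph
  obtain ⟨q, hq⟩ := hH.exists_isPath u v
  refine ⟨q, hq, col, ?_⟩
  have hq' := Walk.IsPath.map (bridgeComponentHom_injective hG comp) hq
  obtain rfl := Walk.IsPath.eq_of_isBridge hp (q := q.map (bridgeComponentHom hG comp)) hq'
    (isBridge_of_mem_edges_map_bridgeComponentHom hG q)
  rw [Walk.edges_map, List.filter_map, List.length_map] at hcol
  exact hcol

lemma exists_isCFConnColoring_bridgeComponent [Finite V] (comp : (bridgeGraph G).ConnectedComponent) :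
    ∃ c : Sym2 comp.supp → ℕ, (∀ e ∈ ((bridgeGraph G).induce comp.supp).edgeSet,
      c e < cfConn ((bridgeGraph G).induce comp.supp)) ∧
      IsCFConnColoring ((bridgeGraph G).induce comp.supp) c :=
  Nat.sInf_mem (exists_isCFConnColoring comp.connected_toSimpleGraph)

lemma cfConn_bridgeComponent_le [Finite V] (hG : G.Connected)
    (comp : (bridgeGraph G).ConnectedComponent) :
    cfConn ((bridgeGraph G).induce comp.supp) ≤ cfConn G := by
  obtain ⟨c, hlt, hc⟩ := Nat.sInf_mem (exists_isCFConnColoring hG)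
  refine Nat.sInf_le ⟨_, fun e he => hlt _ ?_, hc.bridgeComponent hG comp⟩
  induction e with
  | _ a b => exact (bridgeComponentHom hG comp).map_adj he

lemma hG_le_cfConn [Finite V] (hG : G.Connected) : _root_.hG G ≤ cfConn G := by
  have := hG.nonempty
  refine csSup_le ⟨_, (bridgeGraph G).connectedComponentMk (Classical.arbitrary V), rfl⟩ ?_
  rintro _ ⟨comp, rfl⟩
  exact cfConn_bridgeComponent_le hG comp

lemma cfConn_bridgeComponent_le_hG [Finite V] (hG : G.Connected)
    (comp : (bridgeGraph G).ConnectedComponent) :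
    cfConn ((bridgeGraph G).induce comp.supp) ≤ _root_.hG G := by
  refine le_csSup ⟨cfConn G, ?_⟩ ⟨comp, rfl⟩
  rintro _ ⟨comp, rfl⟩
  exact cfConn_bridgeComponent_le hG comp

lemma isBridge_of_forall_adj_eq {v l : V} (hl : ∀ x, G.Adj l x → x = v) (hlv : l ≠ v) :
    G.IsBridge s(l, v) := by
  rw [isBridge_iff_forall_walk_mem_edges]
  intro p
  cases p with
  | nil => exact absurd rfl hlv
  | cons f p =>
    obtain rfl := hl _ f
    simp

/-- Pendant edges at a common vertex can be colored injectively with `hG G` colors. -/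
lemma exists_injOn_pendant [Finite V] (hG : G.Connected) (v : V) :
    ∃ f : V → ℕ, (∀ l, l ≠ v → (∀ x, G.Adj l x → x = v) → f l < _root_.hG G) ∧
      ∀ l m, l ≠ v → m ≠ v → (∀ x, G.Adj l x → x = v) → (∀ x, G.Adj m x → x = v) → l ≠ m →
        f l ≠ f m := by
  classical
  set comp := (bridgeGraph G).connectedComponentMk v
  have hv : v ∈ comp.supp := rfl
  have hadj : ∀ l, l ≠ v → (∀ x, G.Adj l x → x = v) → (bridgeGraph G).Adj l v :=
    fun l h1 h2 => (fromEdgeSet_adj _).2 ⟨isBridge_of_forall_adj_eq h2 h1, h1⟩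
  have hmem : ∀ l, l ≠ v → (∀ x, G.Adj l x → x = v) → l ∈ comp.supp :=
    fun l h1 h2 => ConnectedComponent.sound (hadj l h1 h2).reachable
  obtain ⟨c, hlt, hc⟩ := exists_isCFConnColoring_bridgeComponent comp
  refine ⟨fun l => if h : l ∈ comp.supp then c s(⟨l, h⟩, ⟨v, hv⟩) else 0, ?_, ?_⟩
  · intro l h1 h2
    simp only [hmem l h1 h2, dif_pos]
    exact (hlt _ (hadj l h1 h2)).trans_le (cfConn_bridgeComponent_le_hG hG comp)
  · intro l m hl hm hl' hm' hlm
    have hlc := hmem l hl hl'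
    have hmc := hmem m hm hm'
    simp only [hlc, hmc, dif_pos]
    intro heq
    obtain ⟨p, hp, col, hcol⟩ := hc ⟨l, hlc⟩ ⟨m, hmc⟩ (fun h => hlm (congrArg Subtype.val h))
    have hlv : ((bridgeGraph G).induce comp.supp).Adj ⟨l, hlc⟩ ⟨v, hv⟩ := hadj l hl hl'
    have hvm : ((bridgeGraph G).induce comp.supp).Adj ⟨v, hv⟩ ⟨m, hmc⟩ := (hadj m hm hm').symm
    set q := Walk.cons hlv (Walk.cons hvm Walk.nil) with hqdef
    have hq : q.IsPath := by
      simp [hqdef, hl, hm.symm, hlm]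
    have hpq := Walk.IsPath.eq_of_isBridge
      (Walk.IsPath.map (bridgeComponentHom_injective hG comp) hp)
      (Walk.IsPath.map (bridgeComponentHom_injective hG comp) hq)
      (isBridge_of_mem_edges_map_bridgeComponentHom hG q)
    obtain rfl := Walk.map_injective_of_injective (bridgeComponentHom_injective hG comp) _ _ hpq
    have heq' : c s(⟨l, hlc⟩, ⟨v, hv⟩) = c s(⟨v, hv⟩, ⟨m, hmc⟩) :=
      heq.trans (by rw [Sym2.eq_swap])
    by_cases h : c s(⟨v, hv⟩, ⟨m, hmc⟩) = col <;> simp [hqdef, heq', h] at hcol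

end SimpleGraph

namespace SimpleGraph

variable {V : Type*} {G : SimpleGraph V}

open Classical in
/-- The edge coloring in which the edge joining `v` to `x` has color `g x` and all edges avoiding
`v` have color `0`. -/
noncomputable def spokeColoring (v : V) (g : V → ℕ) (e : Sym2 V) : ℕ :=
  if h : v ∈ e then g (Sym2.Mem.other h) else 0

@[simp]
lemma spokeColoring_left (v x : V) (g : V → ℕ) : spokeColoring v g s(v, x) = g x := by
  have h : v ∈ s(v, x) := Sym2.mem_mk_left v x
  rw [spokeColoring, dif_pos h]
  exact congrArg g (Sym2.congr_right.1 (Sym2.other_spec h))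

@[simp]
lemma spokeColoring_right (v x : V) (g : V → ℕ) : spokeColoring v g s(x, v) = g x := by
  rw [Sym2.eq_swap, spokeColoring_left]

lemma spokeColoring_of_notMem {v : V} (g : V → ℕ) {e : Sym2 V} (h : v ∉ e) :
    spokeColoring v g e = 0 := dif_neg h

lemma filter_spokeColoring_edges {v x y : V} (g : V → ℕ) (hx : x ≠ v)
    (p : (G.deleteIncidenceSet v).Walk x y) :
    p.edges.filter (fun e => spokeColoring v g e = 1) = [] := by
  rw [List.filter_eq_nil_iff]
  intro e he
  rw [spokeColoring_of_notMem]
  · simp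
  · intro hv
    exact notMem_support_of_deleteIncidenceSet hx p (Walk.mem_support_of_mem_edges he hv)

lemma Reachable.exists_adj_right {x y a : V} (h : G.Reachable x a) (hxy : G.Adj x y) :
    ∃ z, G.Adj a z := by
  obtain ⟨p⟩ := h.symm
  cases p with
  | nil => exact ⟨_, hxy⟩
  | cons f p => exact ⟨_, f⟩

/-- `g` colors the spokes at `v`: in every component of `G - v` with an edge, exactly the
representative `r x` of the component receives color `1` and the other vertices color `0`, while
distinct one-vertex components receive distinct colors. -/
structure IsSpokeWeight (G : SimpleGraph V) (v : V) (r : V → V) (g : V → ℕ) : Prop where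
  adj : ∀ x, x ≠ v → G.Adj v x
  reachable : ∀ x, (G.deleteIncidenceSet v).Reachable x (r x)
  eq_of_reachable : ∀ x y, (G.deleteIncidenceSet v).Reachable x y → r x = r y
  eq_one : ∀ x y, (G.deleteIncidenceSet v).Adj x y → x = r x → g x = 1
  eq_zero : ∀ x y, (G.deleteIncidenceSet v).Adj x y → x ≠ r x → g x = 0
  ne : ∀ x y, x ≠ v → y ≠ v → x ≠ y → (∀ z, ¬ (G.deleteIncidenceSet v).Adj x z) →
    (∀ z, ¬ (G.deleteIncidenceSet v).Adj y z) → g x ≠ g y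

namespace IsSpokeWeight

variable {v : V} {r : V → V} {g : V → ℕ}

lemma apply_rep (h : IsSpokeWeight G v r g) {x y : V} (hxy : (G.deleteIncidenceSet v).Adj x y) :
    g (r x) = 1 := by
  obtain ⟨z, hz⟩ := (h.reachable x).exists_adj_right hxy
  exact h.eq_one _ _ hz (h.eq_of_reachable _ _ (h.reachable x))

lemma rep_ne (h : IsSpokeWeight G v r g) {x : V} (hx : x ≠ v) : r x ≠ v := by
  intro hr
  obtain ⟨p⟩ := h.reachable x
  exact notMem_support_of_deleteIncidenceSet hx p (hr ▸ p.end_mem_support)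

lemma exists_isPath_no_one (h : IsSpokeWeight G v r g) {x : V} (hx : x ≠ v)
    (hg : g x ≠ 1 ∨ ∃ y, (G.deleteIncidenceSet v).Adj x y) :
    ∃ p : G.Walk v x, p.IsPath ∧
      (∀ y ∈ p.support, y = v ∨ (G.deleteIncidenceSet v).Reachable x y) ∧
      (p.edges.filter (fun e => spokeColoring v g e = 1)).length = 0 := by
  by_cases hgx : g x = 1
  · obtain ⟨y, hxy⟩ := hg.resolve_left (not_not.2 hgx)
    obtain ⟨hxy', -, hyv⟩ := G.deleteIncidenceSet_adj.1 hxy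
    have hxr : x = r x := by
      by_contra hne
      simp [h.eq_zero x y hxy hne] at hgx
    have hgy : g y = 0 := h.eq_zero y x hxy.symm fun hy => hxy'.ne <| by
      rw [hxr, hy, h.eq_of_reachable _ _ hxy.reachable]
    have hvyx : v ∉ s(y, x) := by simp [hyv.symm, hx.symm]
    refine ⟨.cons (h.adj y hyv) (.cons hxy'.symm .nil), ?_, ?_, ?_⟩
    · simp [hyv.symm, hx.symm, hxy'.ne.symm]
    · simp [hxy.reachable]
    · simp [hgy, spokeColoring_of_notMem g hvyx]
  · exact ⟨(h.adj x hx).toWalk, by simp [hx.symm], by simp, by simp [hgx]⟩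

lemma exists_isPath_one (h : IsSpokeWeight G v r g) {x : V} (hx : x ≠ v)
    (hg : g x = 1 ∨ ∃ y, (G.deleteIncidenceSet v).Adj x y) :
    ∃ p : G.Walk v x, p.IsPath ∧
      (∀ y ∈ p.support, y = v ∨ (G.deleteIncidenceSet v).Reachable x y) ∧
      (p.edges.filter (fun e => spokeColoring v g e = 1)).length = 1 := by
  classical
  by_cases hgx : g x = 1
  · exact ⟨(h.adj x hx).toWalk, by simp [hx.symm], by simp, by simp [hgx]⟩
  · obtain ⟨y, hxy⟩ := hg.resolve_left hgx
    obtain ⟨q, hq⟩ := (h.reachable x).symm.exists_isPath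
    have hr := h.rep_ne hx
    refine ⟨.cons (h.adj _ hr) (q.mapLe (G.deleteIncidenceSet_le v)), ?_, ?_, ?_⟩
    · rw [Walk.cons_isPath_iff, Walk.support_mapLe_eq_support]
      exact ⟨hq.mapLe _, notMem_support_of_deleteIncidenceSet hr q⟩
    · intro z hz
      rw [Walk.support_cons, List.mem_cons, Walk.support_mapLe_eq_support] at hz
      exact hz.imp_right fun hz => (q.dropUntil z hz).reachable.symm
    · rw [Walk.edges_cons, Walk.edges_mapLe_eq_edges]
      simp [h.apply_rep hxy, filter_spokeColoring_edges g hr]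

lemma exists_isPath_of_not_reachable (h : IsSpokeWeight G v r g) {x y : V} (hx : x ≠ v)
    (hy : y ≠ v) (hxy : ¬ (G.deleteIncidenceSet v).Reachable x y) :
    ∃ p : G.Walk x y, p.IsPath ∧
      ∃ col, (p.edges.filter (fun e => spokeColoring v g e = col)).length = 1 := by
  have glue {a b : ℕ} (hab : a + b = 1)
      (hp : ∃ p : G.Walk v x, p.IsPath ∧
        (∀ z ∈ p.support, z = v ∨ (G.deleteIncidenceSet v).Reachable x z) ∧
        (p.edges.filter (fun e => spokeColoring v g e = 1)).length = a)
      (hq : ∃ p : G.Walk v y, p.IsPath ∧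
        (∀ z ∈ p.support, z = v ∨ (G.deleteIncidenceSet v).Reachable y z) ∧
        (p.edges.filter (fun e => spokeColoring v g e = 1)).length = b) :
      ∃ p : G.Walk x y, p.IsPath ∧
        ∃ col, (p.edges.filter (fun e => spokeColoring v g e = col)).length = 1 := by
    obtain ⟨p, hp, hps, hpc⟩ := hp
    obtain ⟨q, hq, hqs, hqc⟩ := hq
    refine ⟨p.reverse.append q, hp.reverse.append_of_inter hq fun z hz hz' => ?_, 1, ?_⟩
    · rw [Walk.support_reverse, List.mem_reverse] at hz
      by_contra hzv
      exact hxy (((hps z hz).resolve_left hzv).trans ((hqs z hz').resolve_left hzv).symm)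
    · rw [Walk.edges_append, Walk.edges_reverse, List.filter_append, List.filter_reverse,
        List.length_append, List.length_reverse, hpc, hqc, hab]
  by_cases hx' : ∃ z, (G.deleteIncidenceSet v).Adj x z
  · by_cases hgy : g y = 1
    · exact glue rfl (h.exists_isPath_no_one hx (.inr hx')) (h.exists_isPath_one hy (.inl hgy))
    · exact glue rfl (h.exists_isPath_one hx (.inr hx')) (h.exists_isPath_no_one hy (.inl hgy))
  by_cases hy' : ∃ z, (G.deleteIncidenceSet v).Adj y z
  · by_cases hgx : g x = 1
    · exact glue rfl (h.exists_isPath_one hx (.inl hgx)) (h.exists_isPath_no_one hy (.inr hy'))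
    · exact glue rfl (h.exists_isPath_no_one hx (.inl hgx)) (h.exists_isPath_one hy (.inr hy'))
  have hne : x ≠ y := by rintro rfl; exact hxy .rfl
  have hg := h.ne x y hx hy hne (not_exists.1 hx') (not_exists.1 hy')
  refine ⟨.cons (h.adj x hx).symm (.cons (h.adj y hy) .nil), ?_, g x, ?_⟩
  · simp [hx, hy.symm, hne]
  · simp [hg.symm]

lemma exists_isPath_of_dist_le (h : IsSpokeWeight G v r g) {x y : V} (hx : x ≠ v)
    (hy : y ≠ v) (hne : x ≠ y) (hxy : (G.deleteIncidenceSet v).Reachable x y)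
    (hdist : (G.deleteIncidenceSet v).dist x (r x) ≤ (G.deleteIncidenceSet v).dist y (r x)) :
    ∃ p : G.Walk x y, p.IsPath ∧
      ∃ col, (p.edges.filter (fun e => spokeColoring v g e = col)).length = 1 := by
  classical
  obtain ⟨q, hq, hlen⟩ := (h.reachable x).exists_path_of_dist
  have hyq : y ∉ q.support := by
    intro hyq
    have h1 := dist_le (q.dropUntil y hyq)
    have h2 := congrArg Walk.length (q.take_spec hyq)
    rw [Walk.length_append] at h2
    have h3 : (q.takeUntil y hyq).length ≠ 0 := fun h0 => hne (Walk.eq_of_length_eq_zero h0)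
    omega
  obtain ⟨z, hyz⟩ : ∃ z, (G.deleteIncidenceSet v).Adj y z := by
    obtain ⟨p⟩ := hxy.symm
    cases p with
    | nil => exact absurd rfl hne
    | cons f p => exact ⟨_, f⟩
  obtain ⟨z', hxz⟩ := hxy.symm.exists_adj_right hyz
  have hr := h.rep_ne hx
  have hyr : y ≠ r y := by
    rw [← h.eq_of_reachable _ _ hxy]
    rintro rfl
    exact hyq q.end_mem_support
  have hvq := notMem_support_of_deleteIncidenceSet hx q
  refine ⟨((q.mapLe (G.deleteIncidenceSet_le v)).concat (h.adj _ hr).symm).concat (h.adj y hy),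
    ((hq.mapLe _).concat ?_ _).concat ?_ _, 1, ?_⟩
  · simpa using hvq
  · simp [Walk.support_concat, hyq, hy]
  · rw [Walk.edges_concat, Walk.edges_concat, Walk.edges_mapLe_eq_edges]
    simp [filter_spokeColoring_edges g hx, h.apply_rep hxz, h.eq_zero y z hyz hyr]

theorem isCFConnColoring (h : IsSpokeWeight G v r g) :
    IsCFConnColoring G (spokeColoring v g) := by
  intro x y hne
  by_cases hadj : G.Adj x y
  · exact ⟨hadj.toWalk, by simp [hadj.ne], spokeColoring v g s(x, y), by simp⟩
  have hx : x ≠ v := by rintro rfl; exact hadj (h.adj y hne.symm)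
  have hy : y ≠ v := by rintro rfl; exact hadj (h.adj x hne).symm
  by_cases hxy : (G.deleteIncidenceSet v).Reachable x y
  · rcases le_total ((G.deleteIncidenceSet v).dist x (r x))
      ((G.deleteIncidenceSet v).dist y (r x)) with hd | hd
    · exact h.exists_isPath_of_dist_le hx hy hne hxy hd
    · rw [h.eq_of_reachable _ _ hxy] at hd
      obtain ⟨p, hp, col, hcol⟩ := h.exists_isPath_of_dist_le hy hx hne.symm hxy.symm hd
      exact ⟨p.reverse, hp.reverse, col, by
        rwa [Walk.edges_reverse, List.filter_reverse, List.length_reverse]⟩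
  · exact h.exists_isPath_of_not_reachable hx hy hxy

end IsSpokeWeight

lemma cfConn_le_of_forall_adj [Finite V] (hG : G.Connected) {v : V}
    (hv : ∀ x, x ≠ v → G.Adj v x) : cfConn G ≤ max 2 (_root_.hG G) := by
  classical
  obtain ⟨f, hf, hfne⟩ := exists_injOn_pendant hG v
  have hpendant {x : V} (hx : x ≠ v) (h : ∀ z, ¬ (G.deleteIncidenceSet v).Adj x z) (z : V)
      (hxz : G.Adj x z) : z = v :=
    by_contra fun hz => h z (G.deleteIncidenceSet_adj.2 ⟨hxz, hx, hz⟩)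
  let r : V → V := fun x => ((G.deleteIncidenceSet v).connectedComponentMk x).out
  let g : V → ℕ := fun x =>
    if ∃ y, (G.deleteIncidenceSet v).Adj x y then if x = r x then 1 else 0 else f x
  have hw : IsSpokeWeight G v r g := by
    refine ⟨hv, fun x => ?_, fun x y hxy => ?_, fun x y hxy hx => ?_, fun x y hxy hx => ?_,
      fun x y hx hy hne hx' hy' => ?_⟩
    · exact (ConnectedComponent.exact (Quot.out_eq _)).symm
    · exact congrArg Quot.out (ConnectedComponent.sound hxy)
    · exact (if_pos ⟨y, hxy⟩).trans (if_pos hx)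
    · exact (if_pos ⟨y, hxy⟩).trans (if_neg hx)
    · simpa [g, hx', hy'] using hfne x y hx hy (hpendant hx hx') (hpendant hy hy') hne
  refine Nat.sInf_le ⟨_, fun e he => ?_, hw.isCFConnColoring⟩
  by_cases hve : v ∈ e
  · obtain ⟨x, rfl⟩ := hve
    have hx : x ≠ v := (G.ne_of_adj he).symm
    rw [spokeColoring_left]
    simp only [g]
    split_ifs with h1 h2
    · simp
    · simp
    · exact (hf x hx (hpendant hx (not_exists.1 h1))).trans_le (le_max_right _ _)
  · simp [spokeColoring_of_notMem g hve]

lemma cfConn_le_two_of_forall_reachable (hG : ∀ v x y : V, x ≠ v → y ≠ v →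
    (G.deleteIncidenceSet v).Reachable x y) {a b : V} (hab : G.Adj a b) : cfConn G ≤ 2 := by
  classical
  refine Nat.sInf_le ⟨fun e => if e = s(a, b) then 1 else 0, fun e _ => ?_, fun x y hxy => ?_⟩
  · dsimp only
    split_ifs <;> simp
  · obtain ⟨p, hp, he⟩ := exists_isPath_mem_edges hG hab hxy
    exact ⟨p, hp, _, hp.isTrail.edges_nodup.length_filter_eq_one he (by simp)⟩

lemma Connected.adj_or_exists_adj_of_dist_le_two (hG : G.Connected) {x y : V} (hxy : x ≠ y)
    (h : G.dist x y ≤ 2) : G.Adj x y ∨ ∃ z, G.Adj x z ∧ G.Adj z y := by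
  obtain ⟨p, hp⟩ := hG.exists_walk_length_eq_dist x y
  rw [← hp] at h
  match p, h with
  | .nil, _ => exact absurd rfl hxy
  | .cons e .nil, _ => exact .inl e
  | .cons e (.cons f .nil), _ => exact .inr ⟨_, e, f⟩
  | .cons _ (.cons _ (.cons _ _)), h => simp at h

/-- In a graph of diameter at most two, a cut vertex is adjacent to all other vertices. -/
lemma Connected.adj_of_not_reachable (hG : G.Connected) (hdist : ∀ x y, G.dist x y ≤ 2)
    {v x y : V} (hx : x ≠ v) (hy : y ≠ v) (hxy : ¬ (G.deleteIncidenceSet v).Reachable x y)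
    {z : V} (hz : z ≠ v) : G.Adj v z := by
  have key {w : V} (hw : w ≠ v) (hzw : ¬ (G.deleteIncidenceSet v).Reachable z w) :
      G.Adj v z := by
    have hne : z ≠ w := by rintro rfl; exact hzw .rfl
    rcases hG.adj_or_exists_adj_of_dist_le_two hne (hdist z w) with h | ⟨m, h1, h2⟩
    · exact absurd (G.deleteIncidenceSet_adj.2 ⟨h, hz, hw⟩).reachable hzw
    · by_cases hm : m = v
      · exact hm ▸ h1.symm
      · exact absurd ((G.deleteIncidenceSet_adj.2 ⟨h1, hz, hm⟩).reachable.trans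
          (G.deleteIncidenceSet_adj.2 ⟨h2, hm, hw⟩).reachable) hzw
  by_cases hzx : (G.deleteIncidenceSet v).Reachable z x
  · exact key hy fun h => hxy (hzx.symm.trans h)
  · exact key hx hzx

end SimpleGraph

/-- For a connected graph `G` of diameter `2`, `cfc(G) = max {2, h(G)}`. -/
theorem cfConn_of_diam_two {V : Type*} [Fintype V] (G : SimpleGraph V)
    (hconn : G.Connected) (hdiam : G.diam = 2) :
    cfConn G = max 2 (hG G) := by
  have hdist (x y : V) : G.dist x y ≤ 2 :=
    hdiam ▸ dist_le_diam (ediam_ne_top_of_diam_ne_zero (by simp [hdiam]))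
  have := hconn.nonempty
  obtain ⟨x, y, hxy⟩ := G.exists_dist_eq_diam
  rw [hdiam] at hxy
  have hne : x ≠ y := by rintro rfl; simp at hxy
  have hadj : ¬ G.Adj x y := fun h => by simp [dist_eq_one_iff_adj.2 h] at hxy
  apply le_antisymm
  · by_cases hcut : ∀ v x y : V, x ≠ v → y ≠ v → (G.deleteIncidenceSet v).Reachable x y
    · obtain ⟨z, hxz, -⟩ :=
        (hconn.adj_or_exists_adj_of_dist_le_two hne hxy.le).resolve_left hadj
      exact (cfConn_le_two_of_forall_reachable hcut hxz).trans (le_max_left _ _)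
    · push Not at hcut
      obtain ⟨v, a, b, ha, hb, hab⟩ := hcut
      exact cfConn_le_of_forall_adj hconn fun z hz =>
        hconn.adj_of_not_reachable hdist ha hb hab hz
  · obtain ⟨c, hlt, hc⟩ := Nat.sInf_mem (exists_isCFConnColoring hconn)
    exact max_le (two_le_of_isCFConnColoring hc hlt hne hadj) (hG_le_cfConn hconn)
end
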